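/- arXiv:1408.6552 — 3 statements merged into one kernel-verified Lean document; each statement's English description precedes it below -/
import Mathlib

section
/- A framework G(p) in ℝ^d (with all points pairwise distinct) is bearing rigid if and only if it is globally bearing rigid. In particular, local rigidity (the existence of some ε > 0 such that every bearing-equivalent framework within distance ε is bearing congruent) already implies the global statement. -/
/-- `projL x` is the orthogonal projection matrix
`P_x = I - (x/‖x‖)(x/‖x‖)ᵀ`, i.e. `projL x y = y - ⟪x,y⟫/‖x‖² • x`. -/
noncomputable def projL {d : ℕ} (x : EuclideanSpace ℝ (Fin d)) :
    EuclideanSpace ℝ (Fin d) →ₗ[ℝ] EuclideanSpace ℝ (Fin d) :=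
  LinearMap.id - (‖x‖ ^ 2)⁻¹ •
    (LinearMap.toSpanSingleton ℝ (EuclideanSpace ℝ (Fin d)) x ∘ₗ (innerSL ℝ x).toLinearMap)

/-!
The bearing constraints of a framework `p` are linear in the competing configuration `p'`, and `p`
satisfies them. So the configurations bearing equivalent to `p`, and those bearing congruent to
`p`, form linear subspaces through `p`, and an inclusion between two subspaces can be tested on an
arbitrarily small neighbourhood of any point of the first one.
-/

open Filter Set Topology

section Framework

variable (R : Type*) {V X : Type*} [Ring R] [AddCommGroup X] [Module R X]

/-- The parallel redrawings of the framework with configuration `p` and edges `edges`: those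
configurations each of whose edge vectors is a multiple of the corresponding edge vector of `p`.
These are the configurations bearing equivalent to `p`, and for `edges = univ` those bearing
congruent to `p`. Edges are ordered pairs, and their orientation is immaterial; using the span in
place of a projection avoids an inner product. -/
def parallelRedrawings (edges : Set (V × V)) (p : V → X) : Submodule R (V → X) :=
  ⨅ e ∈ edges, (Submodule.span R {p e.2 - p e.1}).comap
    (LinearMap.proj (R := R) (φ := fun _ : V ↦ X) e.2 - LinearMap.proj e.1)

variable {R} in
theorem mem_parallelRedrawings {edges : Set (V × V)} {p p' : V → X} :
    p' ∈ parallelRedrawings R edges p ↔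
      ∀ e ∈ edges, p' e.2 - p' e.1 ∈ Submodule.span R {p e.2 - p e.1} := by
  simp [parallelRedrawings]

theorem self_mem_parallelRedrawings (edges : Set (V × V)) (p : V → X) :
    p ∈ parallelRedrawings R edges p :=
  mem_parallelRedrawings.2 fun _ _ ↦ Submodule.mem_span_singleton_self _

/-- Global bearing rigidity: every configuration bearing equivalent to `p` is bearing congruent
to `p`. -/
def IsGloballyBearingRigid (edges : Set (V × V)) (p : V → X) : Prop :=
  parallelRedrawings R edges p ≤ parallelRedrawings R univ p

/-- Bearing rigidity: every configuration bearing equivalent to `p` and close enough to `p` is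
bearing congruent to `p`. Closeness refers to the product topology, so no norm is needed. -/
def IsBearingRigid [TopologicalSpace X] (edges : Set (V × V)) (p : V → X) : Prop :=
  ∀ᶠ p' in 𝓝 p, p' ∈ parallelRedrawings R edges p → p' ∈ parallelRedrawings R univ p

end Framework

section TopologicalModule

variable {R M : Type*} [Ring R] [TopologicalSpace R] [NeBot (𝓝[{r : R | IsUnit r}] 0)]
  [AddCommGroup M] [TopologicalSpace M] [ContinuousAdd M] [Module R M] [ContinuousSMul R M]

theorem submodule_le_of_eventually_mem_imp_mem {S T : Submodule R M} {x : M} (hx : x ∈ S)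
    (h : ∀ᶠ y in 𝓝 x, y ∈ S → y ∈ T) : S ≤ T := by
  have hnhds : (T.comap S.subtype : Set S) ∈ 𝓝 ⟨x, hx⟩ :=
    (continuousAt_subtype_val.eventually h).mono fun y hy ↦ hy y.2
  have : ContinuousAdd S := S.toAddSubmonoid.continuousAdd
  exact Submodule.comap_subtype_eq_top.1 <|
    Submodule.eq_top_of_nonempty_interior' _ ⟨_, mem_interior_iff_mem_nhds.2 hnhds⟩

theorem bearing_rigid_iff_globally_bearing_rigid_general {V : Type*} (edges : Set (V × V))
    (p : V → M) : IsBearingRigid R edges p ↔ IsGloballyBearingRigid R edges p :=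
  ⟨submodule_le_of_eventually_mem_imp_mem (self_mem_parallelRedrawings R edges p),
    fun h ↦ .of_forall fun _ hp' ↦ h hp'⟩

end TopologicalModule

theorem eventually_nhds_pi_iff_sqrt_sum_norm_sq_lt {ι : Type*} [Fintype ι] {X : ι → Type*}
    [∀ i, SeminormedAddCommGroup (X i)] {x : ∀ i, X i} {P : (∀ i, X i) → Prop} :
    (∀ᶠ y in 𝓝 x, P y) ↔ ∃ ε > 0, ∀ y, √(∑ i, ‖y i - x i‖ ^ 2) < ε → P y := by
  have hmap : map WithLp.ofLp (𝓝 (WithLp.toLp 2 x)) = 𝓝 x :=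
    (PiLp.homeomorph 2 X).map_nhds_eq _
  simp only [← hmap, eventually_map, Metric.eventually_nhds_iff, dist_eq_norm,
    PiLp.norm_eq_of_L2, PiLp.sub_apply, (WithLp.equiv 2 (∀ i, X i)).forall_congr_left,
    WithLp.equiv_symm_apply]

section EuclideanSpace

variable {d : ℕ}

theorem projL_eq_starProjection_orthogonal (x : EuclideanSpace ℝ (Fin d)) :
    projL x = (Submodule.span ℝ {x})ᗮ.starProjection := by
  ext1 y
  simp [projL, Submodule.starProjection_orthogonal, Submodule.starProjection_singleton,
    smul_smul, div_eq_inv_mul]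

-- This covers `x = 0`, where `projL 0 = id` because `0⁻¹ = 0`.
theorem projL_apply_eq_zero_iff_mem_span {x y : EuclideanSpace ℝ (Fin d)} :
    projL x y = 0 ↔ y ∈ Submodule.span ℝ {x} := by
  rw [projL_eq_starProjection_orthogonal, ContinuousLinearMap.coe_coe,
    Submodule.starProjection_apply_eq_zero_iff, Submodule.orthogonal_orthogonal]

variable {V : Type*} {p p' : V → EuclideanSpace ℝ (Fin d)}

theorem forall_projL_eq_zero_iff_mem_parallelRedrawings {κ : Type*} {edge : κ → V × V} :
    (∀ k, projL (p (edge k).2 - p (edge k).1) (p' (edge k).2 - p' (edge k).1) = 0) ↔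
      p' ∈ parallelRedrawings ℝ (range edge) p := by
  simp only [projL_apply_eq_zero_iff_mem_span, mem_parallelRedrawings, forall_mem_range]

theorem forall_ne_projL_eq_zero_iff_mem_parallelRedrawings_univ :
    (∀ i j, i ≠ j → projL (p i - p j) (p' i - p' j) = 0) ↔
      p' ∈ parallelRedrawings ℝ univ p := by
  simp only [projL_apply_eq_zero_iff_mem_span, mem_parallelRedrawings, mem_univ, true_imp_iff,
    Prod.forall]
  refine ⟨fun h i j ↦ ?_, fun h i j _ ↦ h j i⟩
  obtain rfl | hij := eq_or_ne i j
  · simp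
  · exact h j i hij.symm

end EuclideanSpace

/-- A framework `G(p)` (pairwise distinct points) is bearing rigid (local
`ε`-version) iff it is globally bearing rigid. -/
theorem bearing_rigid_iff_globally_bearing_rigid {d n m : ℕ} (hd : 2 ≤ d) (hn : 2 ≤ n)
    (E : Fin m → Fin n × Fin n) (hE : ∀ k, (E k).1 ≠ (E k).2)
    (p : Fin n → EuclideanSpace ℝ (Fin d))
    (hp : ∀ i j : Fin n, i ≠ j → p i ≠ p j) :
    (∃ ε > (0 : ℝ), ∀ p' : Fin n → EuclideanSpace ℝ (Fin d),
        Real.sqrt (∑ i, ‖p' i - p i‖ ^ 2) < ε →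
        (∀ k, projL (p (E k).2 - p (E k).1) (p' (E k).2 - p' (E k).1) = 0) →
        ∀ i j : Fin n, i ≠ j → projL (p i - p j) (p' i - p' j) = 0) ↔
    (∀ p' : Fin n → EuclideanSpace ℝ (Fin d),
        (∀ k, projL (p (E k).2 - p (E k).1) (p' (E k).2 - p' (E k).1) = 0) →
        ∀ i j : Fin n, i ≠ j → projL (p i - p j) (p' i - p' j) = 0) := by
  simp only [forall_projL_eq_zero_iff_mem_parallelRedrawings,
    forall_ne_projL_eq_zero_iff_mem_parallelRedrawings_univ,
    ← eventually_nhds_pi_iff_sqrt_sum_norm_sq_lt]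
  exact bearing_rigid_iff_globally_bearing_rigid_general (range E) p
end

section
/- For a framework G(p) in ℝ^d, the following are equivalent: (a) G(p) is infinitesimally bearing rigid; (b) rank(R(p)) = dn − d − 1; (c) Null(R(p)) = span{1_n ⊗ I_d, p} = span{1_n ⊗ I_d, p − 1_n ⊗ p̄}, where p̄ := (1/n)Σ_{i=1}^n p_i is the centroid. -/
/-- The bearing rigidity matrix `R(p) = diag(P_{g_k}/‖e_k‖)(H ⊗ I_d)` of the framework
whose `k`-th oriented edge goes from vertex `(E k).1` to vertex `(E k).2`
(so `e_k = p_{(E k).2} - p_{(E k).1}` and `g_k = e_k/‖e_k‖`), viewed as a linear map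
`ℝ^{dn} → ℝ^{dm}`. -/
noncomputable def bearingMap {d n : ℕ} {ι : Type*} (E : ι → Fin n × Fin n)
    (p : Fin n → EuclideanSpace ℝ (Fin d)) :
    (Fin n → EuclideanSpace ℝ (Fin d)) →ₗ[ℝ] (ι → EuclideanSpace ℝ (Fin d)) :=
  LinearMap.pi fun k =>
    (‖p (E k).2 - p (E k).1‖⁻¹ • projL (p (E k).2 - p (E k).1)) ∘ₗ
      ((LinearMap.proj (R := ℝ) (φ := fun _ : Fin n => EuclideanSpace ℝ (Fin d)) (E k).2) -
       (LinearMap.proj (R := ℝ) (φ := fun _ : Fin n => EuclideanSpace ℝ (Fin d)) (E k).1))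

/-- The linear map `w ↦ 1_n ⊗ w` stacking `n` copies of `w ∈ ℝ^d`; its range is
`span{1_n ⊗ I_d}`, the space of translational motions. -/
noncomputable def constLM (d n : ℕ) :
    EuclideanSpace ℝ (Fin d) →ₗ[ℝ] (Fin n → EuclideanSpace ℝ (Fin d)) :=
  LinearMap.pi fun _ => LinearMap.id

/-!
Translations and scalings always preserve bearings, so the trivial motions lie in the kernel of the
rigidity map `R(p)`, and rigidity means that the two spaces have the same dimension. Once some edge
shows that `p` is not constant, `p` is not a translation, so the trivial motions have dimension
`d + 1`, and rank-nullity turns equality of dimensions into `rank R(p) = dn - d - 1`. The centroid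
is irrelevant: subtracting any translation from `p` leaves the span unchanged.
-/

section LinearAlgebra

variable {R M : Type*} [Ring R] [AddCommGroup M] [Module R M]

lemma sup_span_singleton_sub_of_mem {S : Submodule R M} {y : M} (hy : y ∈ S) (x : M) :
    S ⊔ Submodule.span R {x - y} = S ⊔ Submodule.span R {x} := by
  have self_mem (z : M) : z ∈ S ⊔ Submodule.span R {z} :=
    Submodule.mem_sup_right (Submodule.mem_span_singleton_self z)
  have hy_mem (z : M) : y ∈ S ⊔ Submodule.span R {z} := Submodule.mem_sup_left hy
  refine le_antisymm (sup_le le_sup_left ?_) (sup_le le_sup_left ?_) <;>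
    rw [Submodule.span_singleton_le_iff_mem]
  · exact Submodule.sub_mem _ (self_mem x) (hy_mem x)
  · simpa only [sub_add_cancel] using
      Submodule.add_mem _ (self_mem (x - y)) (hy_mem (x - y))

variable {K V W : Type*} [DivisionRing K] [AddCommGroup V] [Module K V] [FiniteDimensional K V]
  [AddCommGroup W] [Module K W]

lemma ker_le_iff_finrank_range_add_finrank_eq {f : V →ₗ[K] W} {S : Submodule K V}
    (hS : S ≤ LinearMap.ker f) :
    LinearMap.ker f ≤ S ↔
      Module.finrank K (LinearMap.range f) + Module.finrank K S = Module.finrank K V := by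
  rw [← LinearMap.finrank_range_add_finrank_ker f, Nat.add_left_cancel_iff]
  exact ⟨fun h => by rw [le_antisymm h hS], fun h => (Submodule.eq_of_le_of_finrank_eq hS h).ge⟩

end LinearAlgebra

section BearingRigidity

variable {d n : ℕ} {ι : Type*}

/-- The space `span{1_n ⊗ I_d, p}` of trivial infinitesimal bearing motions of a configuration
`p`: the translations together with the scalings of `p`. -/
noncomputable def trivialMotions (p : Fin n → EuclideanSpace ℝ (Fin d)) :
    Submodule ℝ (Fin n → EuclideanSpace ℝ (Fin d)) :=
  LinearMap.range (constLM d n) ⊔ Submodule.span ℝ {p}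

lemma trivialMotions_sub_constLM (p : Fin n → EuclideanSpace ℝ (Fin d))
    (w : EuclideanSpace ℝ (Fin d)) :
    trivialMotions (p - constLM d n w) = trivialMotions p :=
  sup_span_singleton_sub_of_mem (LinearMap.mem_range_self _ w) p

lemma finrank_trivialMotions_le (p : Fin n → EuclideanSpace ℝ (Fin d)) :
    Module.finrank ℝ (trivialMotions p) ≤ d + 1 :=
  calc Module.finrank ℝ (trivialMotions p)
      ≤ Module.finrank ℝ (LinearMap.range (constLM d n)) +
          Module.finrank ℝ (Submodule.span ℝ {p}) :=
        Submodule.finrank_add_le_finrank_add_finrank _ _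
    _ ≤ Module.finrank ℝ (EuclideanSpace ℝ (Fin d)) + 1 :=
        add_le_add (LinearMap.finrank_range_le _) (by simpa using finrank_span_le_card (R := ℝ) {p})
    _ = d + 1 := by rw [finrank_euclideanSpace_fin]

lemma finrank_trivialMotions {p : Fin n → EuclideanSpace ℝ (Fin d)} {i j : Fin n}
    (hij : p i ≠ p j) : Module.finrank ℝ (trivialMotions p) = d + 1 := by
  have hp : p ∉ LinearMap.range (constLM d n) := by
    rintro ⟨w, rfl⟩
    exact hij rfl
  have hinj : Function.Injective (constLM d n) := fun _ _ h => congrFun h i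
  rw [trivialMotions, Submodule.finrank_sup_span_singleton hp,
    LinearMap.finrank_range_of_inj hinj, finrank_euclideanSpace_fin]

lemma projL_self (x : EuclideanSpace ℝ (Fin d)) : projL x x = 0 := by
  have hx : projL x x = x - (‖x‖ ^ 2)⁻¹ • inner ℝ x x • x := rfl
  rw [hx, real_inner_self_eq_norm_sq]
  obtain rfl | h := eq_or_ne x 0
  · simp
  · rw [inv_smul_smul₀ (pow_ne_zero 2 (norm_ne_zero_iff.mpr h)), sub_self]

lemma bearingMap_apply (E : ι → Fin n × Fin n) (p v : Fin n → EuclideanSpace ℝ (Fin d)) (k : ι) :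
    bearingMap E p v k =
      ‖p (E k).2 - p (E k).1‖⁻¹ • projL (p (E k).2 - p (E k).1) (v (E k).2 - v (E k).1) :=
  rfl

lemma trivialMotions_le_ker_bearingMap (E : ι → Fin n × Fin n)
    (p : Fin n → EuclideanSpace ℝ (Fin d)) :
    trivialMotions p ≤ LinearMap.ker (bearingMap E p) := by
  refine sup_le ?translations ?scalings
  case translations =>
    rintro _ ⟨w, rfl⟩
    ext1 k
    rw [bearingMap_apply]
    simp [constLM]
  case scalings =>
    rw [Submodule.span_singleton_le_iff_mem, LinearMap.mem_ker]
    ext1 k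
    rw [bearingMap_apply, projL_self, smul_zero, Pi.zero_apply]

lemma ker_bearingMap_le_trivialMotions_iff_finrank_range (hd : 2 ≤ d) (hn : 2 ≤ n)
    (E : ι → Fin n × Fin n) (p : Fin n → EuclideanSpace ℝ (Fin d))
    (hp : ∀ k, p (E k).1 ≠ p (E k).2) :
    LinearMap.ker (bearingMap E p) ≤ trivialMotions p ↔
      Module.finrank ℝ (LinearMap.range (bearingMap E p)) = d * n - d - 1 := by
  have hdim : Module.finrank ℝ (Fin n → EuclideanSpace ℝ (Fin d)) = d * n := by
    simp [Module.finrank_pi_fintype, mul_comm]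
  have hdn : d + 1 < d * n := by nlinarith
  rw [ker_le_iff_finrank_range_add_finrank_eq (trivialMotions_le_ker_bearingMap E p), hdim]
  obtain hι | ⟨⟨k⟩⟩ := isEmpty_or_nonempty ι
  · -- Without edges `p` may be constant, so `dim (trivialMotions p)` is only bounded above;
    -- but then the rank is `0`, which is too small for either side.
    have hrank : Module.finrank ℝ (LinearMap.range (bearingMap E p)) = 0 :=
      Module.finrank_zero_of_subsingleton
    have hle := finrank_trivialMotions_le p
    omega
  · have heq := finrank_trivialMotions (hp k)
    omega

theorem infinitesimally_bearing_rigid_tfae_general (hd : 2 ≤ d) (hn : 2 ≤ n)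
    (E : ι → Fin n × Fin n) (p : Fin n → EuclideanSpace ℝ (Fin d))
    (hp : ∀ k, p (E k).1 ≠ p (E k).2) :
    List.TFAE [LinearMap.ker (bearingMap E p) ≤ trivialMotions p,
      Module.finrank ℝ (LinearMap.range (bearingMap E p)) = d * n - d - 1,
      LinearMap.ker (bearingMap E p) = trivialMotions p ∧
        LinearMap.ker (bearingMap E p) =
          trivialMotions (p - constLM d n ((n : ℝ)⁻¹ • ∑ i, p i))] := by
  tfae_have 1 ↔ 2 := ker_bearingMap_le_trivialMotions_iff_finrank_range hd hn E p hp
  tfae_have 1 ↔ 3 := by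
    rw [trivialMotions_sub_constLM, and_self]
    exact (trivialMotions_le_ker_bearingMap E p).ge_iff_eq'
  tfae_finish

end BearingRigidity

/-- For a framework `G(p)` in `ℝ^d` the following are equivalent:
(a) `G(p)` is infinitesimally bearing rigid (every infinitesimal bearing motion is trivial);
(b) `rank R(p) = dn - d - 1`;
(c) `Null(R(p)) = span{1_n ⊗ I_d, p} = span{1_n ⊗ I_d, p - 1_n ⊗ p̄}`. -/
theorem infinitesimally_bearing_rigid_tfae {d n m : ℕ} (hd : 2 ≤ d) (hn : 2 ≤ n)
    (E : Fin m → Fin n × Fin n) (p : Fin n → EuclideanSpace ℝ (Fin d))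
    (hp : ∀ k, p (E k).1 ≠ p (E k).2) :
    ((LinearMap.ker (bearingMap E p) ≤
        LinearMap.range (constLM d n) ⊔ Submodule.span ℝ {p}) ↔
      Module.finrank ℝ (LinearMap.range (bearingMap E p)) = d * n - d - 1) ∧
    (Module.finrank ℝ (LinearMap.range (bearingMap E p)) = d * n - d - 1 ↔
      (LinearMap.ker (bearingMap E p) =
          LinearMap.range (constLM d n) ⊔ Submodule.span ℝ {p} ∧
        LinearMap.ker (bearingMap E p) =
          LinearMap.range (constLM d n) ⊔
            Submodule.span ℝ {p - constLM d n ((n : ℝ)⁻¹ • ∑ i, p i)})) := by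
  have h := infinitesimally_bearing_rigid_tfae_general hd hn E p hp
  exact ⟨h.out 0 1, h.out 1 2⟩
end

section
/- Let G(p*) be an infinitesimally bearing rigid framework in ℝ^d with bearings g_k* and centroid p̄*. Suppose a configuration p ∈ ℝ^{dn} with p_i ≠ p_j for every edge satisfies: (i) (H ⊗ I_d)^T diag(P_{g_1}, …, P_{g_m}) g* = 0, where g_k are the bearings of p; (ii) p̄ = p̄* (equal centroids); and (iii) ‖p − 1_n ⊗ p̄‖ = ‖p* − 1_n ⊗ p̄*‖ (equal scale). Then either p = p* (and then g_k = g_k* for all k), or p = −p* + 2(1_n ⊗ p̄*) (and then g_k = −g_k* for all k). In other words, the δ-dynamics has exactly the two equilibria δ = 0 and δ = −2(p* − 1_n ⊗ p̄*) where δ := p − p*. -/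
/-- The bearing-only control field `(H ⊗ I_d)ᵀ diag(P_{g_1}, …, P_{g_m}) g*` evaluated at a
configuration `q`: its `i`-th component is `∑_k [H]_{ki} P_{g_k} g*_k`, where `[H]_{ki} = 1`
if `i` is the head `(E k).2` of edge `k`, `-1` if `i` is its tail `(E k).1`, and `0`
otherwise. -/
noncomputable def bearingCtrl {d n m : ℕ} (E : Fin m → Fin n × Fin n)
    (gs : Fin m → EuclideanSpace ℝ (Fin d)) (q : Fin n → EuclideanSpace ℝ (Fin d)) :
    Fin n → EuclideanSpace ℝ (Fin d) :=
  fun i => ∑ k, ((if (E k).2 = i then (1 : ℝ) else 0) - if (E k).1 = i then (1 : ℝ) else 0) •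
    projL (q (E k).2 - q (E k).1) (gs k)

open Submodule
open scoped RealInnerProductSpace

theorem mem_span_singleton_symm {K M : Type*} [DivisionRing K] [AddCommGroup M] [Module K M]
    {x y : M} (hx : x ≠ 0) (h : x ∈ K ∙ y) : y ∈ K ∙ x := by
  obtain ⟨a, rfl⟩ := mem_span_singleton.1 h
  have ha : a ≠ 0 := fun ha => hx (by rw [ha, zero_smul])
  exact mem_span_singleton.2 ⟨a⁻¹, inv_smul_smul₀ ha y⟩

theorem starProjection_orthogonal_eq_zero_iff {𝕜 H : Type*} [RCLike 𝕜] [NormedAddCommGroup H]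
    [InnerProductSpace 𝕜 H] {K : Submodule 𝕜 H} [K.HasOrthogonalProjection] {x : H} :
    Kᗮ.starProjection x = 0 ↔ x ∈ K := by
  rw [starProjection_apply_eq_zero_iff, orthogonal_orthogonal]

section Frameworks

variable {W ι V : Type*}

/-- The edge vectors `e_k = q_j - q_i` of the framework whose `k`-th edge runs from the vertex
`i = (E k).1` to the vertex `j = (E k).2`. -/
def edgeVector [AddCommGroup V] (E : ι → W × W) (q : W → V) (k : ι) : V :=
  q (E k).2 - q (E k).1

/-- The bearings `g_k = e_k / ‖e_k‖`, with the value `0` on an edge whose endpoints coincide. -/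
noncomputable def bearing [NormedAddCommGroup V] [NormedSpace ℝ V] (E : ι → W × W) (q : W → V)
    (k : ι) : V :=
  NormedSpace.normalize (edgeVector E q k)

/-- The action `(H ⊗ I)ᵀ` of the transposed incidence matrix on families of vectors indexed by the
edges: at each vertex, the incoming minus the outgoing vectors. -/
def incidenceTranspose [Fintype ι] [DecidableEq W] [AddCommGroup V] [Module ℝ V]
    (E : ι → W × W) (f : ι → V) (i : W) : V :=
  ∑ k, ((if (E k).2 = i then (1 : ℝ) else 0) - if (E k).1 = i then (1 : ℝ) else 0) • f k

/-- The centroid `(1/n) ∑ i, q_i` of a configuration. -/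
noncomputable def centroid [Fintype W] [AddCommGroup V] [Module ℝ V] (q : W → V) : V :=
  (Fintype.card W : ℝ)⁻¹ • ∑ i, q i

/-- The scale `‖q - 1 ⊗ q̄‖` of a configuration: its Euclidean spread about the centroid. -/
noncomputable def configScale [Fintype W] [NormedAddCommGroup V] [NormedSpace ℝ V]
    (q : W → V) : ℝ :=
  √(∑ i, ‖q i - centroid q‖ ^ 2)

/-- Infinitesimal bearing rigidity in an arbitrary real vector space. The motions `r` that keep
all bearings to first order are those whose edge vectors are parallel to the ones of `q`; they are
required to be trivial. The converse inclusion always holds and is not part of the definition. -/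
def InfinitesimallyBearingRigid [AddCommGroup V] [Module ℝ V] (E : ι → W × W) (q : W → V) : Prop :=
  ∀ r : W → V, (∀ k, edgeVector E r k ∈ ℝ ∙ edgeVector E q k) →
    ∃ (w : V) (c : ℝ), ∀ i, r i = w + c • q i

theorem sub_centroid_eq_smul [Fintype W] [AddCommGroup V] [Module ℝ V] {p q : W → V} {w : V}
    {c : ℝ} (h : ∀ i, p i = w + c • q i) (i : W) :
    p i - centroid p = c • (q i - centroid q) := by
  have : Nonempty W := ⟨i⟩
  have hcentroid : centroid p = w + c • centroid q := by
    simp only [centroid, h, Finset.sum_add_distrib, ← Finset.smul_sum, smul_add, Finset.sum_const,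
      Finset.card_univ, ← Nat.cast_smul_eq_nsmul ℝ]
    rw [inv_smul_smul₀ (by simp), smul_comm]
  rw [h, hcentroid, smul_sub, add_sub_add_left_eq_sub]

theorem eq_or_eq_neg_of_eq_smul_of_norm_eq [NormedAddCommGroup V] [NormedSpace ℝ V] {x y : V}
    {c : ℝ} (hxy : x = c • y) (hnorm : ‖x‖ = ‖y‖) : x = y ∨ x = -y := by
  subst hxy
  rcases eq_or_ne y 0 with rfl | hy
  · simp
  have habs : |c| = 1 := by
    rwa [norm_smul, Real.norm_eq_abs, mul_eq_right₀ (norm_ne_zero_iff.2 hy)] at hnorm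
  rcases eq_or_eq_neg_of_abs_eq habs with rfl | rfl
  · exact .inl (one_smul ℝ y)
  · exact .inr (neg_one_smul ℝ y)

theorem eq_or_eq_reflection_of_homothetic [Fintype W] [NormedAddCommGroup V] [NormedSpace ℝ V]
    {p q : W → V} {w : V} {c : ℝ} (h : ∀ i, p i = w + c • q i) (hcent : centroid p = centroid q)
    (hscale : configScale p = configScale q) :
    p = q ∨ p = fun i => -q i + (2 : ℝ) • centroid q := by
  let x : PiLp 2 fun _ : W => V := .toLp 2 fun i => p i - centroid p
  let y : PiLp 2 fun _ : W => V := .toLp 2 fun i => q i - centroid q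
  have hxy : x = c • y := PiLp.ext fun i => sub_centroid_eq_smul h i
  have hnorm : ‖x‖ = ‖y‖ := by
    rw [PiLp.norm_eq_of_L2, PiLp.norm_eq_of_L2]
    exact hscale
  refine (eq_or_eq_neg_of_eq_smul_of_norm_eq hxy hnorm).imp (fun hpos => ?_) fun hneg => ?_ <;>
    funext i
  · have hi : p i - centroid p = q i - centroid q := congrFun (congrArg WithLp.ofLp hpos) i
    rwa [hcent, sub_left_inj] at hi
  · have hi : p i - centroid p = -(q i - centroid q) := congrFun (congrArg WithLp.ofLp hneg) i
    rw [sub_eq_iff_eq_add.1 hi, hcent]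
    module

variable [NormedAddCommGroup V] [InnerProductSpace ℝ V]

theorem sum_inner_incidenceTranspose [Fintype W] [DecidableEq W] [Fintype ι] (E : ι → W × W)
    (r : W → V) (f : ι → V) :
    ∑ i, ⟪r i, incidenceTranspose E f i⟫ = ∑ k, ⟪edgeVector E r k, f k⟫ := by
  simp only [incidenceTranspose, inner_sum, inner_smul_right]
  rw [Finset.sum_comm]
  simp [edgeVector, sub_mul, Finset.sum_sub_distrib, inner_sub_left]

theorem inner_starProjection_normalize (K : Submodule ℝ V) [K.HasOrthogonalProjection] (x : V) :
    ⟪x, K.starProjection (NormedSpace.normalize x)⟫ = ‖x‖⁻¹ * ‖K.starProjection x‖ ^ 2 := by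
  have hsq : ⟪x, K.starProjection x⟫ = ‖K.starProjection x‖ ^ 2 := by
    rw [real_inner_comm]
    exact K.re_inner_starProjection_eq_normSq x
  rw [NormedSpace.normalize, map_smul, inner_smul_right, hsq]

theorem edgeVector_mem_span_of_equilibrium [Finite W] [DecidableEq W] [Fintype ι]
    {E : ι → W × W} {p q : W → V}
    (heq : incidenceTranspose E (fun k =>
      (ℝ ∙ edgeVector E p k)ᗮ.starProjection (bearing E q k)) = 0) (k : ι) :
    edgeVector E q k ∈ ℝ ∙ edgeVector E p k := by
  have := Fintype.ofFinite W
  let P (k : ι) := (ℝ ∙ edgeVector E p k)ᗮ.starProjection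
  have hsum : ∑ k, ‖edgeVector E q k‖⁻¹ * ‖P k (edgeVector E q k)‖ ^ 2 = 0 := calc
    _ = ∑ k, ⟪edgeVector E q k, P k (bearing E q k)⟫ := by
      simp only [P, bearing, inner_starProjection_normalize]
    _ = ∑ i, ⟪q i, incidenceTranspose E (fun k => P k (bearing E q k)) i⟫ :=
      (sum_inner_incidenceTranspose E q _).symm
    _ = 0 := by
      simp only [P, heq, Pi.zero_apply, inner_zero_right, Finset.sum_const_zero]
  have hterm := (Finset.sum_eq_zero_iff_of_nonneg fun k _ => by positivity).1 hsum k
    (Finset.mem_univ k)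
  rcases mul_eq_zero.1 hterm with hnorm | hproj
  · rw [norm_eq_zero.1 (inv_eq_zero.1 hnorm)]
    exact zero_mem _
  · exact starProjection_orthogonal_eq_zero_iff.1
      (norm_eq_zero.1 ((pow_eq_zero_iff two_ne_zero).1 hproj))

theorem two_equilibria_general [Fintype W] [DecidableEq W] [Fintype ι] {E : ι → W × W}
    {pstar p : W → V} (hpstar : ∀ k, pstar (E k).1 ≠ pstar (E k).2)
    (hrigid : InfinitesimallyBearingRigid E pstar)
    (heq : incidenceTranspose E (fun k =>
      (ℝ ∙ edgeVector E p k)ᗮ.starProjection (bearing E pstar k)) = 0)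
    (hcent : centroid p = centroid pstar) (hscale : configScale p = configScale pstar) :
    (p = pstar ∧ ∀ k, bearing E p k = bearing E pstar k) ∨
    (p = (fun i => -pstar i + (2 : ℝ) • centroid pstar) ∧
      ∀ k, bearing E p k = -bearing E pstar k) := by
  have hparallel (k) : edgeVector E p k ∈ ℝ ∙ edgeVector E pstar k :=
    mem_span_singleton_symm (sub_ne_zero.2 (hpstar k).symm)
      (edgeVector_mem_span_of_equilibrium heq k)
  obtain ⟨w, c, hwc⟩ := hrigid p hparallel
  refine (eq_or_eq_reflection_of_homothetic hwc hcent hscale).imp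
    (fun hpos => ⟨hpos, fun k => by rw [hpos]⟩) fun hneg => ⟨hneg, fun k => ?_⟩
  have hedge : edgeVector E p k = -edgeVector E pstar k := by
    simp only [hneg, edgeVector]
    abel
  rw [bearing, bearing, hedge, NormedSpace.normalize_neg]

end Frameworks

section EuclideanSpace

variable {d n m : ℕ}

theorem projL_apply_eq_starProjection (x y : EuclideanSpace ℝ (Fin d)) :
    projL x y = (ℝ ∙ x)ᗮ.starProjection y := by
  simp [projL, starProjection_orthogonal', starProjection_singleton, smul_smul, div_eq_inv_mul]

theorem bearingCtrl_eq_incidenceTranspose (E : Fin m → Fin n × Fin n)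
    (g : Fin m → EuclideanSpace ℝ (Fin d)) (q : Fin n → EuclideanSpace ℝ (Fin d)) :
    bearingCtrl E g q =
      incidenceTranspose E fun k => (ℝ ∙ edgeVector E q k)ᗮ.starProjection (g k) := by
  funext i
  simp only [bearingCtrl, incidenceTranspose, edgeVector, projL_apply_eq_starProjection]

theorem infinitesimallyBearingRigid_of_ker_bearingMap_le {ι : Type*} {E : ι → Fin n × Fin n}
    {q : Fin n → EuclideanSpace ℝ (Fin d)}
    (hker : LinearMap.ker (bearingMap E q) ≤ LinearMap.range (constLM d n) ⊔ ℝ ∙ q) :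
    InfinitesimallyBearingRigid E q := by
  intro r hr
  have hrker : r ∈ LinearMap.ker (bearingMap E q) := by
    rw [LinearMap.mem_ker]
    funext k
    have hproj : projL (q (E k).2 - q (E k).1) (r (E k).2 - r (E k).1) = 0 := by
      rw [projL_apply_eq_starProjection]
      exact starProjection_orthogonal_eq_zero_iff.2 (hr k)
    simp [bearingMap, hproj]
  obtain ⟨_, ⟨w, rfl⟩, _, hc, hsum⟩ := mem_sup.1 (hker hrker)
  obtain ⟨c, rfl⟩ := mem_span_singleton.1 hc
  exact ⟨w, c, fun i => (congrFun hsum i).symm⟩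

end EuclideanSpace

/-- Let `G(p*)` be infinitesimally bearing rigid with bearings `g*`. If a
configuration `p` (with `p_i ≠ p_j` on edges) satisfies
(i) `(H ⊗ I_d)ᵀ diag(P_{g_k}) g* = 0`, (ii) equal centroid, and (iii) equal scale, then
either `p = p*` (and all bearings equal `g*_k`) or `p = -p* + 2(1_n ⊗ p̄*)` (and all
bearings equal `-g*_k`). -/
theorem two_equilibria {d n m : ℕ} (hd : 2 ≤ d) (hn : 2 ≤ n)
    (E : Fin m → Fin n × Fin n)
    (pstar p : Fin n → EuclideanSpace ℝ (Fin d))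
    (hpstar : ∀ k, pstar (E k).1 ≠ pstar (E k).2)
    (hp : ∀ k, p (E k).1 ≠ p (E k).2)
    (hibr : LinearMap.ker (bearingMap E pstar) =
      LinearMap.range (constLM d n) ⊔ Submodule.span ℝ {pstar})
    (gstar : Fin m → EuclideanSpace ℝ (Fin d))
    (hgstar : ∀ k, gstar k =
      ‖pstar (E k).2 - pstar (E k).1‖⁻¹ • (pstar (E k).2 - pstar (E k).1))
    (heq : bearingCtrl E gstar p = 0)
    (hcent : (n : ℝ)⁻¹ • ∑ i, p i = (n : ℝ)⁻¹ • ∑ i, pstar i)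
    (hscale : Real.sqrt (∑ i, ‖p i - (n : ℝ)⁻¹ • ∑ l, p l‖ ^ 2) =
      Real.sqrt (∑ i, ‖pstar i - (n : ℝ)⁻¹ • ∑ l, pstar l‖ ^ 2)) :
    (p = pstar ∧ ∀ k,
        ‖p (E k).2 - p (E k).1‖⁻¹ • (p (E k).2 - p (E k).1) = gstar k) ∨
    (p = (fun i => -pstar i + (2 : ℝ) • ((n : ℝ)⁻¹ • ∑ l, pstar l)) ∧ ∀ k,
        ‖p (E k).2 - p (E k).1‖⁻¹ • (p (E k).2 - p (E k).1) = -gstar k) := by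
  obtain rfl : gstar = bearing E pstar := funext hgstar
  rw [bearingCtrl_eq_incidenceTranspose] at heq
  have h := two_equilibria_general hpstar
    (infinitesimallyBearingRigid_of_ker_bearingMap_le hibr.le) heq
  simp only [centroid, configScale, Fintype.card_fin] at h
  exact h hcent hscale
end
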